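/- arXiv:2409.00417 — 3 statements merged into one kernel-verified Lean document; each statement's English description precedes it below -/
import Mathlib

section
/- Let p ∈ ℕ and let B be a p × p real matrix (indexed by Fin p) whose edge relation E, defined by 'E k l iff B l k ≠ 0' (a directed edge from k to l), is acyclic, i.e. the transitive closure of E is irreflexive. Then B is nilpotent, I − B is invertible, and for D := (I − B)⁻¹ one has: D i i = 1 for every i, and for every pair i ≠ j, D j i equals the sum over all directed paths π from i to j of the products of edge coefficients along π, i.e. D j i = Σ_{π} Π_{t < m(π)} B k_{t+1} k_t where π ranges over the (finitely many) sequences i = k₀, k₁, …, k_{m(π)} = j with m(π) ≥ 1 and E k_t k_{t+1} for every t. (This quantity is the total effect from variable i to variable j.) -/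
open scoped Classical

noncomputable section

/-- Directed edge from `k` to `l` in the causal graph of coefficient matrix `B`. -/
def edgeRel {p : ℕ} (B : Matrix (Fin p) (Fin p) ℝ) (k l : Fin p) : Prop := B l k ≠ 0

/-- `B` is acyclic: the transitive closure of its edge relation is irreflexive. -/
def Acyclic {p : ℕ} (B : Matrix (Fin p) (Fin p) ℝ) : Prop :=
  Irreflexive (Relation.TransGen (edgeRel B))

/-!
The `(j, i)` entry of `B ^ m` is the sum over all sequences of `m + 1` vertices from `i` to `j` of
the product of the coefficients along the sequence, and only directed paths contribute. In an
acyclic graph the vertices of a directed path are distinct, so a path has fewer edges than there are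
vertices and no nontrivial path is closed. Hence `B` is nilpotent and its positive powers have zero
diagonal, and the claim is the Neumann series `(1 - B)⁻¹ = ∑ m, B ^ m` read entrywise.
-/

section DirectedPaths

variable {V : Type*} {r : V → V → Prop} {m : ℕ}

/-- The directed paths with `m` edges from `i` to `j` in the graph with edge relation `r`, encoded
as their sequences of `m + 1` vertices. -/
def directedPaths [Fintype V] [DecidableEq V] (r : V → V → Prop) [DecidableRel r] (m : ℕ)
    (i j : V) : Finset (Fin (m + 1) → V) :=
  {f | f 0 = i ∧ f (Fin.last m) = j ∧ ∀ t : Fin m, r (f t.castSucc) (f t.succ)}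

theorem transGen_of_rel_succ_of_lt {f : Fin (m + 1) → V}
    (hf : ∀ t : Fin m, r (f t.castSucc) (f t.succ)) {a b : Fin (m + 1)} (hab : a < b) :
    Relation.TransGen r (f a) (f b) :=
  (Fin.liftFun_iff_succ _).2 (fun t => .single (hf t)) hab

theorem injective_of_rel_succ [Std.Irrefl (Relation.TransGen r)] {f : Fin (m + 1) → V}
    (hf : ∀ t : Fin m, r (f t.castSucc) (f t.succ)) : Function.Injective f :=
  .of_lt_imp_ne fun _ _ hab => ne_of_irrefl (transGen_of_rel_succ_of_lt hf hab)

variable [Fintype V] [DecidableEq V] [DecidableRel r] [Std.Irrefl (Relation.TransGen r)]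

theorem directedPaths_eq_empty_of_card_le (hm : Fintype.card V ≤ m) (i j : V) :
    directedPaths r m i j = ∅ := by
  refine Finset.filter_eq_empty_iff.2 fun f _ ⟨_, _, hf⟩ => ?_
  have hcard := Fintype.card_le_of_injective f (injective_of_rel_succ hf)
  rw [Fintype.card_fin] at hcard
  lia

theorem directedPaths_self_eq_empty (hm : m ≠ 0) (i : V) : directedPaths r m i i = ∅ := by
  refine Finset.filter_eq_empty_iff.2 fun f _ ⟨hstart, hend, hf⟩ => hm ?_
  have hlast := injective_of_rel_succ hf (hend.trans hstart.symm)
  exact Fin.last_eq_zero_iff.1 hlast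

end DirectedPaths

section MatrixPowers

variable {V R : Type*} [Fintype V] [DecidableEq V]

theorem matrix_pow_apply_eq_sum_prod [CommSemiring R] (B : Matrix V V R) (m : ℕ) (i j : V) :
    (B ^ m) j i = ∑ f : Fin (m + 1) → V with f 0 = i ∧ f (Fin.last m) = j,
      ∏ t : Fin m, B (f t.succ) (f t.castSucc) := by
  induction m generalizing i with
  | zero =>
    rw [Finset.sum_filter, ← (Equiv.funUnique (Fin 1) V).symm.sum_comp]
    simp [Matrix.one_apply, ite_and, eq_comm]
  | succ m ih =>
    calc (B ^ (m + 1)) j i = ∑ k, (B ^ m) j k * B k i := by rw [pow_succ, Matrix.mul_apply]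
      _ = ∑ k, ∑ g : Fin (m + 1) → V with g (Fin.last m) = j ∧ g 0 = k,
            (∏ t : Fin m, B (g t.succ) (g t.castSucc)) * B (g 0) i := by
        refine Finset.sum_congr rfl fun k _ => ?_
        simp only [ih, Finset.sum_mul, and_comm]
        exact Finset.sum_congr rfl fun g hg => by rw [(Finset.mem_filter.1 hg).2.2]
      _ = ∑ g : Fin (m + 1) → V with g (Fin.last m) = j,
            (∏ t : Fin m, B (g t.succ) (g t.castSucc)) * B (g 0) i := by
        simp only [← Finset.filter_filter]
        exact Finset.sum_fiberwise _ _ _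
      _ = ∑ f : Fin (m + 2) → V with f 0 = i ∧ f (Fin.last (m + 1)) = j,
            ∏ t : Fin (m + 1), B (f t.succ) (f t.castSucc) := by
        refine Finset.sum_nbij' (fun g => Fin.cons i g) (fun f => Fin.tail f) ?_ ?_ ?_ ?_ ?_
        · simp [← Fin.succ_last]
        · simp [Fin.tail]
        · simp
        · simp only [Finset.mem_filter_univ]
          rintro f ⟨rfl, -⟩
          exact Fin.cons_self_tail f
        · simp [Fin.prod_univ_succ (n := m), mul_comm]

theorem matrix_pow_apply_eq_sum_directedPaths [CommSemiring R] {B : Matrix V V R}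
    {r : V → V → Prop} [DecidableRel r] (hB : ∀ k l, B l k ≠ 0 → r k l) (m : ℕ) (i j : V) :
    (B ^ m) j i = ∑ f ∈ directedPaths r m i j, ∏ t : Fin m, B (f t.succ) (f t.castSucc) := by
  simp only [directedPaths, ← and_assoc]
  rw [← Finset.filter_filter, matrix_pow_apply_eq_sum_prod]
  symm
  apply Finset.sum_filter_of_ne
  intro f _ hprod t
  exact hB _ _ fun hzero => hprod (Finset.prod_eq_zero (Finset.mem_univ t) hzero)

theorem matrix_inv_one_sub_eq_geom_sum [CommRing R] {B : Matrix V V R} {k : ℕ} (hB : B ^ k = 0) :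
    (1 - B)⁻¹ = ∑ m ∈ Finset.range k, B ^ m :=
  Matrix.inv_eq_right_inv (by rw [mul_neg_geom_sum, hB, sub_zero])

end MatrixPowers

section AcyclicSupport

variable {V R : Type*} [Fintype V] [DecidableEq V] {r : V → V → Prop}
  [Std.Irrefl (Relation.TransGen r)]

theorem matrix_pow_card_eq_zero_of_acyclic [CommSemiring R] {B : Matrix V V R}
    (hB : ∀ k l, B l k ≠ 0 → r k l) : B ^ Fintype.card V = 0 := by
  ext j i
  rw [matrix_pow_apply_eq_sum_directedPaths hB, directedPaths_eq_empty_of_card_le le_rfl,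
    Finset.sum_empty, Matrix.zero_apply]

theorem matrix_pow_apply_self_eq_zero_of_acyclic [CommSemiring R] {B : Matrix V V R}
    (hB : ∀ k l, B l k ≠ 0 → r k l) {m : ℕ} (hm : m ≠ 0) (i : V) : (B ^ m) i i = 0 := by
  rw [matrix_pow_apply_eq_sum_directedPaths hB, directedPaths_self_eq_empty hm, Finset.sum_empty]

theorem matrix_inv_one_sub_apply_of_acyclic [CommRing R] {B : Matrix V V R}
    (hB : ∀ k l, B l k ≠ 0 → r k l) (i j : V) :
    (1 - B)⁻¹ j i =
      (1 : Matrix V V R) j i + ∑ m ∈ Finset.range (Fintype.card V), (B ^ (m + 1)) j i := by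
  have hpow : B ^ (Fintype.card V + 1) = 0 :=
    pow_eq_zero_of_le (Nat.le_succ _) (matrix_pow_card_eq_zero_of_acyclic hB)
  rw [matrix_inv_one_sub_eq_geom_sum hpow, Finset.sum_range_succ', pow_zero, Matrix.add_apply,
    Matrix.sum_apply, add_comm]

theorem stmt0_general [CommRing R] [DecidableRel r] (B : Matrix V V R)
    (hB : ∀ k l, B l k ≠ 0 → r k l) :
    IsNilpotent B ∧ IsUnit (1 - B) ∧ (∀ i, (1 - B)⁻¹ i i = 1) ∧
      ∀ i j : V, i ≠ j →
        (1 - B)⁻¹ j i =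
          ∑ m ∈ Finset.range (Fintype.card V),
            ∑ f ∈ directedPaths r (m + 1) i j,
              ∏ t : Fin (m + 1), B (f t.succ) (f t.castSucc) := by
  have hnil : IsNilpotent B := ⟨_, matrix_pow_card_eq_zero_of_acyclic hB⟩
  refine ⟨hnil, hnil.isUnit_one_sub, fun i => ?_, fun i j hij => ?_⟩
  · simp only [matrix_inv_one_sub_apply_of_acyclic hB, Matrix.one_apply_eq,
      matrix_pow_apply_self_eq_zero_of_acyclic hB (Nat.succ_ne_zero _), Finset.sum_const_zero,
      add_zero]
  · simp only [matrix_inv_one_sub_apply_of_acyclic hB, Matrix.one_apply_ne hij.symm, zero_add,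
      matrix_pow_apply_eq_sum_directedPaths hB]

end AcyclicSupport

theorem stmt0 (p : ℕ) (B : Matrix (Fin p) (Fin p) ℝ) (hacyc : Acyclic B) :
    IsNilpotent B ∧ IsUnit (1 - B) ∧ (∀ i, (1 - B)⁻¹ i i = 1) ∧
      ∀ i j : Fin p, i ≠ j →
        (1 - B)⁻¹ j i =
          ∑ m ∈ Finset.range p,
            ∑ f ∈ Finset.univ.filter
                (fun f : Fin (m + 2) → Fin p =>
                  f 0 = i ∧ f (Fin.last (m + 1)) = j ∧
                    ∀ t : Fin (m + 1), edgeRel B (f t.castSucc) (f t.succ)),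
              ∏ t : Fin (m + 1), B (f t.succ) (f t.castSucc) := by
  have : Std.Irrefl (Relation.TransGen (edgeRel B)) := ⟨hacyc⟩
  simpa only [Fintype.card_fin, directedPaths] using
    stmt0_general (r := edgeRel B) B fun _ _ hkl => hkl
end
end

section
/- Let p ∈ ℕ and let B be a p × p real matrix whose edge relation E (defined by 'E k l iff B l k ≠ 0') is acyclic, and set D := (I − B)⁻¹. Let i, j, k be indices with k ≠ j. If every directed path from k to j passes through the vertex i (i.e., i occurs among the vertices of every such path), then D j k = D j i · D i k. -/
open scoped Classical

noncomputable section

/-- A directed path from `k` to `j`: a sequence `k = f 0, f 1, …, f m = j` with `m ≥ 1`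
and an edge `f t → f (t+1)` for every `t < m`. -/
def IsDirectedPath {p : ℕ} (B : Matrix (Fin p) (Fin p) ℝ) (k j : Fin p) (m : ℕ)
    (f : ℕ → Fin p) : Prop :=
  1 ≤ m ∧ f 0 = k ∧ f m = j ∧ ∀ t < m, edgeRel B (f t) (f (t + 1))

/-- The path `f 0, …, f m` passes through the vertex `i`. -/
def PassesThrough {p : ℕ} (i : Fin p) (m : ℕ) (f : ℕ → Fin p) : Prop :=
  ∃ t ≤ m, f t = i

/-!
The matrix `D = (1 - B)⁻¹` solves `D = 1 + B * D`, so `D l k` is determined by the entries `D m k`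
at the parents `m` of `l`, and acyclicity allows induction along edges. If `k` cannot reach `l ≠ i`
while avoiding `i`, then `l ≠ k` and `k` cannot reach any parent of `l` while avoiding `i`; hence
`D l k` and `D l i * D i k` satisfy the same recursion, and at `l = i` they agree because
`D i i = 1`.
-/

section Walks

variable {α : Type*} {r : α → α → Prop} {a b : α}

/-- The vertices `f 0, …, f m` form a walk of length `m` from `a` to `b` along `r`; the values of
`f` beyond `m` are irrelevant. Unlike for `IsDirectedPath`, the length `m = 0` is allowed. -/
def IsWalk (r : α → α → Prop) (a b : α) (m : ℕ) (f : ℕ → α) : Prop :=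
  f 0 = a ∧ f m = b ∧ ∀ t < m, r (f t) (f (t + 1))

theorem exists_isWalk_of_reflTransGen (h : Relation.ReflTransGen r a b) :
    ∃ m f, IsWalk r a b m f := by
  induction h using Relation.ReflTransGen.head_induction_on with
  | refl => exact ⟨0, fun _ => b, rfl, rfl, by simp⟩
  | @head a c hac _ ih =>
    obtain ⟨m, f, hstart, hend, hstep⟩ := ih
    refine ⟨m + 1, fun | 0 => a | t + 1 => f t, rfl, hend, fun t ht => ?_⟩
    cases t with
    | zero => exact (congrArg (r a) hstart).mpr hac
    | succ t => exact hstep t (Nat.lt_of_succ_lt_succ ht)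

/-- The steps of `r` that do not enter `i`. A walk along `r` that starts outside `i` avoids `i`
exactly when all its steps are of this kind. -/
def AvoidingRel (r : α → α → Prop) (i : α) (a b : α) : Prop := r a b ∧ b ≠ i

theorem IsWalk.ne_of_avoidingRel {i : α} {m t : ℕ} {f : ℕ → α}
    (hf : IsWalk (AvoidingRel r i) a b m f) (ha : a ≠ i) (ht : t ≤ m) : f t ≠ i := by
  obtain ⟨hstart, -, hstep⟩ := hf
  cases t with
  | zero => exact hstart ▸ ha
  | succ t => exact (hstep t ht).2

theorem not_reflTransGen_avoidingRel {i : α} (ha : a ≠ i)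
    (hpass : ∀ m f, IsWalk r a b m f → ∃ t ≤ m, f t = i) :
    ¬ Relation.ReflTransGen (AvoidingRel r i) a b := by
  intro h
  obtain ⟨m, f, hf⟩ := exists_isWalk_of_reflTransGen h
  obtain ⟨t, ht, hti⟩ := hpass m f ⟨hf.1, hf.2.1, fun t ht => (hf.2.2 t ht).1⟩
  exact hf.ne_of_avoidingRel ha ht hti

theorem wellFounded_of_irrefl_transGen [Finite α] (h : ∀ a, ¬ Relation.TransGen r a a) :
    WellFounded r := by
  have : Std.Irrefl (Relation.TransGen r) := ⟨h⟩
  exact Subrelation.wf Relation.TransGen.single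
    (Finite.wellFounded_of_trans_of_irrefl (Relation.TransGen r))

end Walks

/-- The edge relation of a square matrix with arbitrary index and entry types, oriented as in
`edgeRel`: there is an edge from `k` to `l` when `B l k ≠ 0`. -/
def SupportRel {n R : Type*} [Zero R] (B : Matrix n n R) (k l : n) : Prop := B l k ≠ 0

section Semiring

variable {n R : Type*} [Fintype n] [DecidableEq n] [Semiring R] {B D : Matrix n n R}

theorem isNilpotent_of_wellFounded_supportRel (hwf : WellFounded (SupportRel B)) :
    IsNilpotent B := by
  have row_eventually_zero (l : n) : ∀ᶠ t in Filter.atTop, ∀ k, (B ^ t) l k = 0 := by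
    induction l using hwf.induction with
    | _ l ih =>
      have parents_zero : ∀ᶠ t in Filter.atTop, ∀ m, SupportRel B m l → ∀ k, (B ^ t) m k = 0 := by
        simpa only [Filter.eventually_all, Filter.eventually_imp_distrib_left] using ih
      rw [← Filter.map_add_atTop_eq_nat 1, Filter.eventually_map]
      filter_upwards [parents_zero] with t ht k
      rw [pow_succ', Matrix.mul_apply]
      refine Finset.sum_eq_zero fun m _ => ?_
      by_cases hml : B l m = 0
      · rw [hml, zero_mul]
      · rw [ht m hml k, mul_zero]
  obtain ⟨t, ht⟩ := (Filter.eventually_all.mpr row_eventually_zero).exists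
  exact ⟨t, Matrix.ext ht⟩

theorem apply_eq_sum_of_ne (hD : D = 1 + B * D) {k l : n} (hlk : l ≠ k) :
    D l k = ∑ m, B l m * D m k := by
  conv_lhs => rw [hD, Matrix.add_apply, Matrix.one_apply_ne hlk, zero_add, Matrix.mul_apply]

theorem reflTransGen_supportRel_of_apply_ne_zero (hwf : WellFounded (SupportRel B))
    (hD : D = 1 + B * D) {k l : n} (hlk : D l k ≠ 0) :
    Relation.ReflTransGen (SupportRel B) k l := by
  induction l using hwf.induction with
  | _ l ih =>
    obtain rfl | hne := eq_or_ne l k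
    · exact .refl
    rw [apply_eq_sum_of_ne hD hne] at hlk
    obtain ⟨m, -, hm⟩ := Finset.exists_ne_zero_of_sum_ne_zero hlk
    have hml : SupportRel B m l := left_ne_zero_of_mul hm
    exact (ih m hml (right_ne_zero_of_mul hm)).tail hml

theorem apply_self_eq_one (hwf : WellFounded (SupportRel B)) (hD : D = 1 + B * D) (k : n) :
    D k k = 1 := by
  have no_cycle (m : n) : B k m * D m k = 0 := by
    by_contra hm
    have hkm := reflTransGen_supportRel_of_apply_ne_zero hwf hD (right_ne_zero_of_mul hm)
    exact hwf.transGen.irrefl.irrefl k (.tail' hkm (left_ne_zero_of_mul hm))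
  rw [hD, Matrix.add_apply, Matrix.one_apply_eq, Matrix.mul_apply,
    Finset.sum_eq_zero fun m _ => no_cycle m, add_zero]

theorem apply_eq_mul_of_not_reflTransGen_avoidingRel (hwf : WellFounded (SupportRel B))
    (hD : D = 1 + B * D) {i k l : n}
    (hkl : ¬ Relation.ReflTransGen (AvoidingRel (SupportRel B) i) k l) :
    D l k = D l i * D i k := by
  induction l using hwf.induction with
  | _ l ih =>
    obtain rfl | hli := eq_or_ne l i
    · rw [apply_self_eq_one hwf hD, one_mul]
    have hlk : l ≠ k := by
      rintro rfl
      exact hkl .refl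
    have parents_eq (m : n) : B l m * D m k = B l m * (D m i * D i k) := by
      by_cases hml : B l m = 0
      · rw [hml, zero_mul, zero_mul]
      · rw [ih m hml fun hkm => hkl (hkm.tail ⟨hml, hli⟩)]
    calc D l k = ∑ m, B l m * D m k := apply_eq_sum_of_ne hD hlk
      _ = ∑ m, B l m * (D m i * D i k) := Finset.sum_congr rfl fun m _ => parents_eq m
      _ = (∑ m, B l m * D m i) * D i k := by simp only [Finset.sum_mul, mul_assoc]
      _ = D l i * D i k := by rw [apply_eq_sum_of_ne hD hli]

theorem apply_eq_mul_of_forall_isWalk (hwf : WellFounded (SupportRel B))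
    (hD : D = 1 + B * D) {i j k : n}
    (hpass : ∀ m f, IsWalk (SupportRel B) k j m f → ∃ t ≤ m, f t = i) :
    D j k = D j i * D i k := by
  obtain rfl | hki := eq_or_ne k i
  · rw [apply_self_eq_one hwf hD, mul_one]
  · exact apply_eq_mul_of_not_reflTransGen_avoidingRel hwf hD
      (not_reflTransGen_avoidingRel hki hpass)

end Semiring

section CommRing

variable {n R : Type*} [Fintype n] [DecidableEq n] [CommRing R]

theorem inv_one_sub_eq_one_add_mul {B : Matrix n n R} (hB : IsNilpotent B) :
    (1 - B)⁻¹ = 1 + B * (1 - B)⁻¹ := by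
  have hdet : IsUnit (1 - B).det := (Matrix.isUnit_iff_isUnit_det _).mp hB.isUnit_one_sub
  rw [← sub_eq_iff_eq_add, ← one_sub_mul, Matrix.mul_nonsing_inv _ hdet]

theorem stmt1_general (B : Matrix n n R)
    (hacyc : ∀ l, ¬ Relation.TransGen (SupportRel B) l l) (i j k : n)
    (hpass : ∀ m f, IsWalk (SupportRel B) k j m f → ∃ t ≤ m, f t = i) :
    (1 - B)⁻¹ j k = (1 - B)⁻¹ j i * (1 - B)⁻¹ i k := by
  have hwf : WellFounded (SupportRel B) := wellFounded_of_irrefl_transGen hacyc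
  have hD := inv_one_sub_eq_one_add_mul (isNilpotent_of_wellFounded_supportRel hwf)
  exact apply_eq_mul_of_forall_isWalk hwf hD hpass

end CommRing

theorem stmt1 (p : ℕ) (B : Matrix (Fin p) (Fin p) ℝ) (hacyc : Acyclic B)
    (i j k : Fin p) (hkj : k ≠ j)
    (hpass : ∀ (m : ℕ) (f : ℕ → Fin p), IsDirectedPath B k j m f → PassesThrough i m f) :
    (1 - B)⁻¹ j k = (1 - B)⁻¹ j i * (1 - B)⁻¹ i k := by
  refine stmt1_general B hacyc i j k fun m f hf => hpass m f ⟨Nat.one_le_iff_ne_zero.mpr ?_, hf⟩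
  rintro rfl
  exact hkj (hf.1.symm.trans hf.2.1)
end
end

section
/- Every directed moral graph (DMG) has exactly one source node, i.e. exactly one vertex with no parents. -/
/-- The edge relation has no directed cycles: its transitive closure is irreflexive. -/
def IsDAGRel {V : Type} (E : V → V → Prop) : Prop :=
  Irreflexive (Relation.TransGen E)

/-- Weak connectivity: the reflexive–transitive closure of the symmetrization of `E`
relates every pair of vertices. -/
def WeaklyConnectedRel {V : Type} (E : V → V → Prop) : Prop :=
  ∀ a b : V, Relation.ReflTransGen (fun u v => E u v ∨ E v u) a b

/-- The moral condition: any two distinct parents of a common child are adjacent. -/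
def MoralRel {V : Type} (E : V → V → Prop) : Prop :=
  ∀ k i j : V, E i k → E j k → i ≠ j → (E i j ∨ E j i)

/-- A directed moral graph (DMG): a weakly connected DAG satisfying the moral condition. -/
def IsDMG {V : Type} (E : V → V → Prop) : Prop :=
  IsDAGRel E ∧ WeaklyConnectedRel E ∧ MoralRel E

/-- The edge relation of the induced subgraph on `V' ⊆ V`. -/
def inducedRel {V : Type} (E : V → V → Prop) (V' : Set V) : V' → V' → Prop :=
  fun a b => E a b

/-!
In a moral graph, any vertex reachable from a source `s` has all its parents reachable from `s`:
walk a directed path `s ⟶ ⋯ ⟶ p ⟶ c` backwards from `c`. A parent `b` of `c` equals `p`, is a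
child of `p`, or is a parent of `p`; the first two cases make `b` reachable, and the third repeats
one step closer to `s`, where it must stop because `s` has no parents. By weak connectivity a source
thus reaches every vertex, in particular every other source, and a source is only reachable from
itself. A source exists because a finite acyclic edge relation is well-founded.
-/

open Relation

/-- A source node of the graph with edge relation `E`: a vertex with no parents. -/
def IsSource {V : Type*} (E : V → V → Prop) (s : V) : Prop :=
  ∀ i, ¬ E i s

theorem exists_isSource_of_wellFounded {V : Type*} [Nonempty V] {E : V → V → Prop}
    (hwf : WellFounded E) : ∃ s, IsSource E s := by
  obtain ⟨s, -, hs⟩ := hwf.has_min Set.univ Set.univ_nonempty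
  exact ⟨s, fun i => hs i (Set.mem_univ i)⟩

theorem IsSource.eq_of_reflTransGen {V : Type*} {E : V → V → Prop} {s t : V}
    (ht : IsSource E t) (hst : ReflTransGen E s t) : t = s := by
  rcases hst.cases_tail with hts | ⟨p, -, hpt⟩
  · exact hts
  · exact absurd hpt (ht p)

section

variable {V : Type} {E : V → V → Prop} {s : V}

theorem IsDAGRel.wellFounded [Finite V] (hdag : IsDAGRel E) : WellFounded E := by
  have : Std.Irrefl (TransGen E) := ⟨hdag⟩
  exact Subrelation.wf TransGen.single (Finite.wellFounded_of_trans_of_irrefl (TransGen E))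

theorem MoralRel.reflTransGen_parent (hmoral : MoralRel E) (hs : IsSource E s) {b c : V}
    (hsc : ReflTransGen E s c) (hbc : E b c) : ReflTransGen E s b := by
  induction hsc with
  | refl => exact absurd hbc (hs b)
  | @tail p c hsp hpc ih =>
    obtain rfl | hne := eq_or_ne p b
    · exact hsp
    · rcases hmoral c p b hpc hbc hne with hpb | hbp
      · exact hsp.tail hpb
      · exact ih hbp

theorem MoralRel.reflTransGen_of_isSource (hmoral : MoralRel E) (hconn : WeaklyConnectedRel E)
    (hs : IsSource E s) (v : V) : ReflTransGen E s v := by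
  induction hconn s v with
  | refl => exact .refl
  | tail _ hadj ih =>
    rcases hadj with hout | hin
    · exact ih.tail hout
    · exact hmoral.reflTransGen_parent hs ih hin

end

theorem stmt15_general {V : Type} [Nonempty V] {E : V → V → Prop} (hwf : WellFounded E)
    (hconn : WeaklyConnectedRel E) (hmoral : MoralRel E) : ∃! s, IsSource E s := by
  obtain ⟨s, hs⟩ := exists_isSource_of_wellFounded hwf
  exact ⟨s, hs, fun t ht => ht.eq_of_reflTransGen (hmoral.reflTransGen_of_isSource hconn hs t)⟩

theorem stmt15 (V : Type) [Fintype V] [Nonempty V] (E : V → V → Prop)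
    (hdmg : IsDMG E) :
    ∃! s : V, ∀ i : V, ¬ E i s := by
  obtain ⟨hdag, hconn, hmoral⟩ := hdmg
  exact stmt15_general hdag.wellFounded hconn hmoral
end
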